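/- Let P be a probability distribution on {0,1}^n with marginals P_B = M_{N∖B} P for B ⊆ N = {1,…,n} (with P_∅ ≡ the constant function 1), and let c_N = 2^{−n} Σ_y P(y) σ_N(y). Then for all x ∈ {0,1}^n, Σ_{B ⊊ N} (−1)^{n−|B|−1} 2^{|B|−n} P_B(x) = P(x) − c_N σ_N(x). -/

import Mathlib

/-- Flip the coordinates of `x ∈ {0,1}ⁿ` indexed by `A`. -/
def flipOn {n : ℕ} (A : Finset (Fin n)) (x : Fin n → Bool) : Fin n → Bool :=
  fun i => if i ∈ A then !(x i) else x i

/-- The bit-flip operator `κ_A`, the composite of the `κ_i` over `i ∈ A`: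
`(κ_A f)(x) = f(x with coordinates in A flipped)`. -/
def kop {n : ℕ} (A : Finset (Fin n)) (f : (Fin n → Bool) → ℝ) : (Fin n → Bool) → ℝ :=
  fun x => f (flipOn A x)

/-- The operator `M_A`, the composite of the commuting operators
`(M_i f)(x) = f(x) + f(x with i-th coordinate flipped)` over `i ∈ A`;
equivalently `(M_A f)(x) = Σ_{B ⊆ A} f(x with coordinates in B flipped)`. -/
def Mop {n : ℕ} (A : Finset (Fin n)) (f : (Fin n → Bool) → ℝ) : (Fin n → Bool) → ℝ :=
  fun x => ∑ B ∈ A.powerset, f (flipOn B x)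

/-- A probability distribution on the subset `A ⊆ N` of the binary variables:
a nonnegative function on `{0,1}ⁿ`, constant in the coordinates outside `A`,
with `M_A P_A` the constant function 1. -/
def IsDistOn {n : ℕ} (A : Finset (Fin n)) (f : (Fin n → Bool) → ℝ) : Prop :=
  (∀ x, 0 ≤ f x) ∧ (∀ i, i ∉ A → kop {i} f = f) ∧ Mop A f = fun _ => (1 : ℝ)

/-- A family `(P_A)_{A ⊊ N}` of distributions on the proper subsets of `N` is
equimarginal if `M_{B∖A} P_B = M_{C∖A} P_C` whenever `A ⊆ B ∩ C` with `B, C ⊊ N`. -/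
def Equimarginal {n : ℕ} (P : Finset (Fin n) → (Fin n → Bool) → ℝ) : Prop :=
  ∀ A B C : Finset (Fin n), B ⊂ Finset.univ → C ⊂ Finset.univ → A ⊆ B → A ⊆ C →
    Mop (B \ A) (P B) = Mop (C \ A) (P C)

/-- The sign function `σ_A(x) = Π_{i∈A} (-1)^{x_i}`. -/
def sigmaFn {n : ℕ} (A : Finset (Fin n)) (x : Fin n → Bool) : ℝ :=
  ∏ i ∈ A, (if x i then (-1 : ℝ) else 1)

lemma inner_aux {n : ℕ} (C : Finset (Fin n)) :
    ∑ A : Finset (Fin n), (if C ⊆ A then (-1/2 : ℝ) ^ A.card else 0) = (-1) ^ C.card / 2 ^ n := by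
  have h := Finset.prod_add (fun _ : Fin n => (-1/2 : ℝ)) (fun i => if i ∈ C then (0:ℝ) else 1)
    Finset.univ
  have h1 : ∏ i : Fin n, ((-1/2 : ℝ) + if i ∈ C then (0:ℝ) else 1) = (-1) ^ C.card / 2 ^ n := by
    have : ∀ i : Fin n, ((-1/2 : ℝ) + if i ∈ C then (0:ℝ) else 1)
        = (if i ∈ C then (-1) else 1) * (1/2) := by
      intro i; split_ifs <;> norm_num
    simp only [this]
    rw [Finset.prod_mul_distrib, Finset.prod_ite]
    simp
    field_simp
  rw [← h1, h, Finset.powerset_univ]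
  refine Finset.sum_congr rfl fun A _ => ?_
  rw [Finset.prod_const]
  split_ifs with hC
  · rw [Finset.prod_eq_one, mul_one]
    intro i hi
    rw [if_neg]
    intro hi'
    exact (Finset.mem_sdiff.1 hi).2 (hC hi')
  · obtain ⟨i, hi, hA⟩ := Finset.not_subset.1 hC
    rw [Finset.prod_eq_zero (i := i) (by simp [hA]) (by simp [hi]), mul_zero]

lemma sigma_flip {n : ℕ} (C : Finset (Fin n)) (x : Fin n → Bool) :
    sigmaFn Finset.univ (flipOn C x) * sigmaFn Finset.univ x = (-1) ^ C.card := by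
  unfold sigmaFn flipOn
  rw [← Finset.prod_mul_distrib]
  have : ∀ i : Fin n, ((if (if i ∈ C then !(x i) else x i) then (-1 : ℝ) else 1)
      * (if x i then (-1 : ℝ) else 1)) = if i ∈ C then (-1) else 1 := by
    intro i
    by_cases h : i ∈ C <;> cases hx : x i <;> simp [h]
  simp only [this]
  rw [Finset.prod_ite]
  simp

lemma sum_flip {n : ℕ} (x : Fin n → Bool) (g : (Fin n → Bool) → ℝ) :
    ∑ C : Finset (Fin n), g (flipOn C x) = ∑ y, g y := by
  refine Finset.sum_bij' (fun C _ => flipOn C x)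
    (fun y _ => Finset.univ.filter (fun i => y i ≠ x i)) (by simp) (by simp) ?_ ?_ (by simp)
  · intro C _
    ext i
    by_cases h : i ∈ C <;> simp [flipOn, h]
  · intro y _
    funext i
    simp only [flipOn, Finset.mem_filter, Finset.mem_univ, true_and]
    cases hx : x i <;> cases hy : y i <;> simp

lemma full_aux {n : ℕ} (P : (Fin n → Bool) → ℝ) (x : Fin n → Bool) :
    ∑ A : Finset (Fin n), (-1/2 : ℝ) ^ A.card * Mop A P x
      = ((∑ y : Fin n → Bool, P y * sigmaFn Finset.univ y) / 2 ^ n) * sigmaFn Finset.univ x := by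
  have h1 : ∀ A : Finset (Fin n), (-1/2 : ℝ) ^ A.card * Mop A P x
      = ∑ C : Finset (Fin n), P (flipOn C x) * (if C ⊆ A then (-1/2 : ℝ) ^ A.card else 0) := by
    intro A
    have hp : A.powerset = Finset.univ.filter (fun C => C ⊆ A) := by ext; simp
    unfold Mop
    rw [hp, Finset.sum_filter, Finset.mul_sum]
    refine Finset.sum_congr rfl fun C _ => ?_
    split_ifs <;> ring
  simp only [h1]
  rw [Finset.sum_comm]
  simp only [← Finset.mul_sum, inner_aux]
  rw [← sum_flip x (fun y => P y * sigmaFn Finset.univ y), Finset.sum_div, Finset.sum_mul]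
  refine Finset.sum_congr rfl fun C _ => ?_
  rw [← sigma_flip C x]
  ring

/-- equation (18) of the paper.  For a probability distribution `P` on
`{0,1}ⁿ` with marginals `P_B = M_{N∖B} P` (and `P_∅ ≡ 1 = M_N P`), and
`c_N = 2⁻ⁿ Σ_y P(y) σ_N(y)`, one has
`Σ_{B ⊊ N} (-1)^{n-|B|-1} 2^{|B|-n} P_B(x) = P(x) - c_N σ_N(x)`. -/
theorem stmt_7 (n : ℕ) (P : (Fin n → Bool) → ℝ)
    (hnn : ∀ x, 0 ≤ P x) (hsum : ∑ x : Fin n → Bool, P x = 1) (x : Fin n → Bool) :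
    (∑ B ∈ Finset.univ.filter (fun B : Finset (Fin n) => B ⊂ Finset.univ),
        (-1 : ℝ) ^ (n - B.card - 1) * (2 ^ B.card / 2 ^ n) * Mop (Finset.univ \ B) P x)
      = P x - ((∑ y : Fin n → Bool, P y * sigmaFn Finset.univ y) / 2 ^ n)
            * sigmaFn Finset.univ x := by
  have h := full_aux P x
  rw [← Equiv.sum_comp (Function.Involutive.toPerm (compl : Finset (Fin n) → Finset (Fin n)) compl_involutive)] at h
  rw [← Finset.sum_erase_add _ _ (Finset.mem_univ (Finset.univ : Finset (Fin n)))] at h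
  have h0 : Mop (∅ : Finset (Fin n)) P x = P x := by
    have hf : flipOn ∅ x = x := by
      funext i
      simp [flipOn]
    simp [Mop, hf]
  have hs : Finset.univ.filter (fun B : Finset (Fin n) => B ⊂ Finset.univ)
      = Finset.univ.erase Finset.univ := by
    ext B
    simp [Finset.ssubset_univ_iff]
  rw [hs, ← h]
  simp only [Function.Involutive.coe_toPerm, Finset.compl_univ, Finset.card_empty, pow_zero, one_mul, h0]
  rw [sub_add_cancel_right, ← Finset.sum_neg_distrib]
  refine Finset.sum_congr rfl fun B hB => ?_
  have hlt : B.card < n := by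
    have := (Finset.card_lt_iff_ne_univ B).2 (Finset.ne_of_mem_erase hB)
    simpa using this
  rw [← Finset.compl_eq_univ_sdiff, Finset.card_compl, Fintype.card_fin, ← neg_mul]
  congr 1
  obtain ⟨k, hk⟩ := Nat.exists_eq_add_of_lt hlt
  have e : n - B.card = k + 1 := by omega
  have hp : (2 : ℝ) ^ n = 2 ^ B.card * 2 ^ (k + 1) := by
    rw [← pow_add]
    exact congrArg _ hk
  rw [e, Nat.add_sub_cancel, div_pow, hp]
  field_simp
  ring
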